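/- Let z₀, γ₀ ∈ 𝔻 and γ₁, γ₂ ∈ 𝔻. For ε in the closed unit disk define f_ε(z) := T_{γ₀}(T_{−z₀}(z)·T_{γ₁}(T_{−z₀}(z)·T_{γ₂}(ε·T_{−z₀}(z)))). Then every f_ε belongs to ℋ with f_ε(z₀) = γ₀, H¹f_ε(z₀) = γ₁, H²f_ε(z₀) = γ₂, and moreover {f'''(z₀) : f ∈ ℋ, f(z₀) = γ₀, H¹f(z₀) = γ₁, H²f(z₀) = γ₂} = {f_ε'''(z₀) : |ε| ≤ 1}. -/

import Mathlib

open Complex Metric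

/-- `ℋ`: analytic self-maps of the open unit disk. -/
def Hclass (f : ℂ → ℂ) : Prop :=
  DifferentiableOn ℂ f (ball (0 : ℂ) 1) ∧ Set.MapsTo f (ball (0 : ℂ) 1) (ball (0 : ℂ) 1)

/-- The Möbius transformation `T_a(z) = (z + a)/(1 + conj(a) z)`. -/
noncomputable def T (a z : ℂ) : ℂ := (z + a) / (1 + (starRingEnd ℂ) a * z)

/-- The (first-order) hyperbolic derivative `H¹f(z) = (1-|z|²)f'(z)/(1-|f(z)|²)`. -/
noncomputable def H1 (f : ℂ → ℂ) (z : ℂ) : ℂ :=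
  ((1 - ‖z‖ ^ 2 : ℝ) : ℂ) * deriv f z / ((1 - ‖f z‖ ^ 2 : ℝ) : ℂ)

/-- The second Peschl invariant derivative `D₂f(z)`. -/
noncomputable def D2 (f : ℂ → ℂ) (z : ℂ) : ℂ :=
  ((1 - ‖z‖ ^ 2 : ℝ) : ℂ) ^ 2 / ((1 - ‖f z‖ ^ 2 : ℝ) : ℂ) *
    (iteratedDeriv 2 f z - 2 * (starRingEnd ℂ) z * deriv f z / ((1 - ‖z‖ ^ 2 : ℝ) : ℂ) +
      2 * (starRingEnd ℂ) (f z) * (deriv f z) ^ 2 / ((1 - ‖f z‖ ^ 2 : ℝ) : ℂ))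

/-- The second-order hyperbolic derivative `H²f(z) = D₂f(z)/(2(1-|H¹f(z)|²))`. -/
noncomputable def H2 (f : ℂ → ℂ) (z : ℂ) : ℂ :=
  D2 f z / (2 * ((1 - ‖H1 f z‖ ^ 2 : ℝ) : ℂ))

/-- The extremal candidates
`f_ε(z) = T_{γ₀}(T_{-z₀}(z)·T_{γ₁}(T_{-z₀}(z)·T_{γ₂}(ε·T_{-z₀}(z))))`. -/
noncomputable def fE (z₀ γ₀ γ₁ γ₂ ε z : ℂ) : ℂ :=
  T γ₀ (T (-z₀) z * T γ₁ (T (-z₀) z * T γ₂ (ε * T (-z₀) z)))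

lemma den_ne {a z : ℂ} (ha : a ∈ ball (0:ℂ) 1) (hz : z ∈ ball (0:ℂ) 1) :
    1 + (starRingEnd ℂ) a * z ≠ 0 := by
  intro h
  simp only [mem_ball_zero_iff] at ha hz
  have h1 : (starRingEnd ℂ) a * z = -1 := by linear_combination h
  have h2 : ‖a‖ * ‖z‖ = 1 := by
    have := congrArg norm h1
    simpa using this
  nlinarith [norm_nonneg a, norm_nonneg z]

lemma one_sub_eq (a : ℂ) : ((1 - ‖a‖ ^ 2 : ℝ) : ℂ) = 1 - (starRingEnd ℂ) a * a := by
  push_cast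
  rw [Complex.conj_mul']

lemma one_sub_ne {a : ℂ} (ha : a ∈ ball (0:ℂ) 1) : 1 - (starRingEnd ℂ) a * a ≠ 0 := by
  have := den_ne (a := a) (z := -a) ha (by simpa using ha)
  intro h; apply this; linear_combination h

lemma T_maps {a z : ℂ} (ha : a ∈ ball (0:ℂ) 1) (hz : z ∈ ball (0:ℂ) 1) :
    T a z ∈ ball (0:ℂ) 1 := by
  have hd := den_ne ha hz
  simp only [mem_ball_zero_iff] at *
  unfold T
  rw [norm_div, div_lt_one (norm_pos_iff.mpr hd)]
  apply lt_of_pow_lt_pow_left₀ 2 (norm_nonneg _)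
  have ha2 : ‖a‖^2 < 1 := by nlinarith [norm_nonneg a]
  have hz2 : ‖z‖^2 < 1 := by nlinarith [norm_nonneg z]
  rw [← Complex.normSq_eq_norm_sq] at *
  rw [← Complex.normSq_eq_norm_sq]
  simp only [Complex.normSq_apply, Complex.add_re, Complex.add_im, Complex.mul_re, Complex.mul_im,
    Complex.conj_re, Complex.conj_im, Complex.one_re, Complex.one_im] at *
  nlinarith [mul_pos (sub_pos.mpr ha2) (sub_pos.mpr hz2)]

lemma neg_mem {a : ℂ} (ha : a ∈ ball (0:ℂ) 1) : -a ∈ ball (0:ℂ) 1 := by simpa using ha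

lemma T_inv {a z : ℂ} (ha : a ∈ ball (0:ℂ) 1) (hz : z ∈ ball (0:ℂ) 1) :
    T a (T (-a) z) = z := by
  have h1 := den_ne (neg_mem ha) hz
  have h2 := den_ne ha (T_maps (neg_mem ha) hz)
  have h3 := one_sub_ne ha
  unfold T at *
  rw [div_eq_iff h2]
  have ht : (z + -a) / (1 + (starRingEnd ℂ) (-a) * z) * (1 + (starRingEnd ℂ) (-a) * z) = z + -a :=
    div_mul_cancel₀ _ h1
  generalize (z + -a) / (1 + (starRingEnd ℂ) (-a) * z) = t at *
  rw [map_neg] at ht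
  linear_combination ht

lemma T_self (a : ℂ) : T (-a) a = 0 := by simp [T]
lemma T_zero (a : ℂ) : T a 0 = a := by simp [T]

lemma T_hasDeriv {a z : ℂ} (hd : 1 + (starRingEnd ℂ) a * z ≠ 0) :
    HasDerivAt (T a) ((1 - (starRingEnd ℂ) a * a) / (1 + (starRingEnd ℂ) a * z) ^ 2) z := by
  have h1 : HasDerivAt (fun z => z + a) 1 z := (hasDerivAt_id z).add_const a
  have h2 : HasDerivAt (fun z => 1 + (starRingEnd ℂ) a * z) ((starRingEnd ℂ) a * 1) z :=
    ((hasDerivAt_id z).const_mul _).const_add 1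
  refine HasDerivAt.congr_deriv (f := T a) (h1.div h2 hd) ?_
  congr 1
  ring

lemma T_an {a z : ℂ} (hd : 1 + (starRingEnd ℂ) a * z ≠ 0) : AnalyticAt ℂ (T a) z := by
  unfold T
  exact (analyticAt_id.add analyticAt_const).div
    (analyticAt_const.add (analyticAt_const.mul analyticAt_id)) hd

open Filter Topology in
lemma T_comp_an {z₀ γ : ℂ} (hz₀ : z₀ ∈ ball (0:ℂ) 1) {g : ℂ → ℂ} (hg : AnalyticAt ℂ g z₀) :
    AnalyticAt ℂ (fun z => T (-z₀) z) z₀ ∧ AnalyticAt ℂ (fun z => T γ (T (-z₀) z * g z)) z₀ := by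
  have h1 : AnalyticAt ℂ (fun z => T (-z₀) z) z₀ := T_an (den_ne (neg_mem hz₀) hz₀)
  refine ⟨h1, ?_⟩
  have h2 : AnalyticAt ℂ (fun z => T (-z₀) z * g z) z₀ := h1.mul hg
  exact AnalyticAt.fun_comp (g := T γ) (f := fun z => T (-z₀) z * g z)
    (T_an (by simp [T_self])) h2

open Filter Topology in
lemma step_val {z₀ γ : ℂ} (hz₀ : z₀ ∈ ball (0:ℂ) 1) (hγ : γ ∈ ball (0:ℂ) 1) {F g : ℂ → ℂ}
    (hg : AnalyticAt ℂ g z₀) (hF : ∀ᶠ z in 𝓝 z₀, F z = T γ (T (-z₀) z * g z)) :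
    F z₀ = γ ∧ H1 F z₀ = g z₀ ∧ (g z₀ ∈ ball (0:ℂ) 1 → H2 F z₀ = H1 g z₀) := by
  obtain ⟨hτ, -⟩ := T_comp_an (γ := γ) hz₀ hg
  have hF0 : F z₀ = γ := by rw [hF.self_of_nhds, T_self, zero_mul, T_zero]
  have hden : AnalyticAt ℂ (fun z => 1 + (starRingEnd ℂ) γ * (T (-z₀) z * g z)) z₀ :=
    analyticAt_const.add (analyticAt_const.mul (hτ.mul hg))
  have hne : ∀ᶠ z in 𝓝 z₀, 1 + (starRingEnd ℂ) γ * (T (-z₀) z * g z) ≠ 0 := by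
    apply hden.continuousAt.eventually_ne
    simp [T_self]
  have hτne : ∀ᶠ z in 𝓝 z₀, 1 + (starRingEnd ℂ) (-z₀) * z ≠ 0 := by
    apply ContinuousAt.eventually_ne (by fun_prop)
    exact den_ne (neg_mem hz₀) hz₀
  have hz := one_sub_ne hz₀
  have hγ' := one_sub_ne hγ
  -- first derivative near the point
  have hd1 : ∀ᶠ z in 𝓝 z₀, deriv F z =
      (1 - (starRingEnd ℂ) γ * γ) / (1 + (starRingEnd ℂ) γ * (T (-z₀) z * g z)) ^ 2 *
      ((1 - (starRingEnd ℂ) z₀ * z₀) / (1 + (starRingEnd ℂ) (-z₀) * z) ^ 2 * g z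
        + T (-z₀) z * deriv g z) := by
    filter_upwards [hF.eventually_nhds, hne, hτne, hg.eventually_analyticAt] with z h1 h2 h3 h4
    rw [Filter.EventuallyEq.deriv_eq h1]
    have e1 := T_hasDeriv h3
    have e2 := (e1.mul h4.differentiableAt.hasDerivAt)
    have e3 := HasDerivAt.comp z (h₂ := T γ) (h := fun z => T (-z₀) z * g z) (T_hasDeriv h2) e2
    have := e3.deriv
    simp only [map_neg, neg_mul_neg] at *
    exact this
  have d1 : deriv F z₀ = (1 - (starRingEnd ℂ) γ * γ) * g z₀ / (1 - (starRingEnd ℂ) z₀ * z₀) := by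
    rw [hd1.self_of_nhds, T_self]
    have : 1 + (starRingEnd ℂ) (-z₀) * z₀ = 1 - (starRingEnd ℂ) z₀ * z₀ := by
      rw [map_neg]; ring
    rw [this]
    field_simp
    ring
  have hH1 : H1 F z₀ = g z₀ := by
    unfold H1
    rw [one_sub_eq, one_sub_eq, d1, hF0]
    field_simp
  refine ⟨hF0, hH1, fun hg0 => ?_⟩
  have hg' := one_sub_ne hg0
  have d2 : iteratedDeriv 2 F z₀ = (1 - (starRingEnd ℂ) γ * γ) *
      (-2 * (starRingEnd ℂ) γ * (g z₀ / (1 - (starRingEnd ℂ) z₀ * z₀)) ^ 2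
        + 2 * (starRingEnd ℂ) z₀ * g z₀ / (1 - (starRingEnd ℂ) z₀ * z₀) ^ 2
        + 2 * deriv g z₀ / (1 - (starRingEnd ℂ) z₀ * z₀)) := by
    rw [iteratedDeriv_succ, iteratedDeriv_one, Filter.EventuallyEq.deriv_eq hd1]
    have e1 := T_hasDeriv (hτne.self_of_nhds)
    have eg := hg.differentiableAt.hasDerivAt
    have eg' := hg.deriv.differentiableAt.hasDerivAt
    have e2 : HasDerivAt (fun z => 1 + (starRingEnd ℂ) γ * (T (-z₀) z * g z)) _ z₀ :=
      ((e1.mul eg).const_mul ((starRingEnd ℂ) γ)).const_add 1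
    have e3 : HasDerivAt (fun z => 1 + (starRingEnd ℂ) (-z₀) * z) _ z₀ :=
      ((hasDerivAt_id z₀).const_mul ((starRingEnd ℂ) (-z₀))).const_add 1
    have e4 := ((hasDerivAt_const z₀ (1 - (starRingEnd ℂ) γ * γ)).div (e2.pow 2)
      (pow_ne_zero 2 hne.self_of_nhds)).mul
      ((((hasDerivAt_const z₀ (1 - (starRingEnd ℂ) z₀ * z₀)).div (e3.pow 2)
        (pow_ne_zero 2 hτne.self_of_nhds)).mul eg).add (e1.mul eg'))
    refine (HasDerivAt.deriv e4).trans ?_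
    have : 1 + (starRingEnd ℂ) (-z₀) * z₀ = 1 - (starRingEnd ℂ) z₀ * z₀ := by
      rw [map_neg]; ring
    simp [T_self, this]
    have : 1 + -((starRingEnd ℂ) z₀ * z₀) = 1 - (starRingEnd ℂ) z₀ * z₀ := by ring
    simp only [this]
    field_simp
    ring
  unfold H2
  rw [hH1]
  unfold D2 H1
  simp only [one_sub_eq]
  rw [d1, d2, hF0]
  field_simp
  ring

open Filter Topology in
/-- agreement to order `n` at `z₀` -/
def Agree (n : ℕ) (z₀ : ℂ) (f g : ℂ → ℂ) : Prop :=
  AnalyticAt ℂ f z₀ ∧ AnalyticAt ℂ g z₀ ∧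
    ∃ u : ℂ → ℂ, AnalyticAt ℂ u z₀ ∧ ∀ᶠ z in 𝓝 z₀, f z - g z = (z - z₀) ^ n * u z

open Filter Topology in
lemma Agree.step {n : ℕ} {z₀ γ : ℂ} (hz₀ : z₀ ∈ ball (0:ℂ) 1) {F G f g : ℂ → ℂ}
    (h : Agree n z₀ f g)
    (hF : ∀ᶠ z in 𝓝 z₀, F z = T γ (T (-z₀) z * f z))
    (hG : ∀ᶠ z in 𝓝 z₀, G z = T γ (T (-z₀) z * g z)) : Agree (n + 1) z₀ F G := by
  obtain ⟨hf, hg, u, hu, hfg⟩ := h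
  obtain ⟨hτ, hFa⟩ := T_comp_an (γ := γ) hz₀ hf
  obtain ⟨-, hGa⟩ := T_comp_an (γ := γ) hz₀ hg
  have hd : ∀ f : ℂ → ℂ, AnalyticAt ℂ f z₀ →
      AnalyticAt ℂ (fun z => 1 + (starRingEnd ℂ) γ * (T (-z₀) z * f z)) z₀ := fun f hf =>
    analyticAt_const.add (analyticAt_const.mul (hτ.mul hf))
  have hne : ∀ f : ℂ → ℂ, AnalyticAt ℂ f z₀ →
      ∀ᶠ z in 𝓝 z₀, 1 + (starRingEnd ℂ) γ * (T (-z₀) z * f z) ≠ 0 := by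
    intro f hf
    apply (hd f hf).continuousAt.eventually_ne
    simp [T_self]
  have hτne0 := den_ne (neg_mem hz₀) hz₀
  have hτne : ∀ᶠ z in 𝓝 z₀, 1 + (starRingEnd ℂ) (-z₀) * z ≠ 0 :=
    ContinuousAt.eventually_ne (by fun_prop) hτne0
  refine ⟨hFa.congr (hF.mono fun _ h => h.symm), hGa.congr (hG.mono fun _ h => h.symm),
    fun z => (1 - (starRingEnd ℂ) γ * γ) * u z / ((1 + (starRingEnd ℂ) (-z₀) * z) *
      (1 + (starRingEnd ℂ) γ * (T (-z₀) z * f z)) * (1 + (starRingEnd ℂ) γ * (T (-z₀) z * g z))),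
    ?_, ?_⟩
  · refine (analyticAt_const.mul hu).div (((analyticAt_const.add
      (analyticAt_const.mul analyticAt_id)).mul (hd f hf)).mul (hd g hg)) ?_
    exact mul_ne_zero (mul_ne_zero hτne0 (hne f hf).self_of_nhds) (hne g hg).self_of_nhds
  · filter_upwards [hfg, hF, hG, hne f hf, hne g hg, hτne] with z h1 h2 h3 h4 h5 h6
    have ht : T (-z₀) z * (1 + (starRingEnd ℂ) (-z₀) * z) = z - z₀ := by
      rw [T, div_mul_cancel₀ _ h6]; ring
    rw [h2, h3]
    generalize T (-z₀) z = t at *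
    unfold T
    rw [div_sub_div _ _ h4 h5, mul_div_assoc', div_eq_div_iff (mul_ne_zero h4 h5)
      (mul_ne_zero (mul_ne_zero h6 h4) h5), pow_succ]
    have key : (z - z₀) ^ n * (z - z₀) * ((1 - (starRingEnd ℂ) γ * γ) * u z)
      = (t * (1 + (starRingEnd ℂ) (-z₀) * z)) * (1 - (starRingEnd ℂ) γ * γ) * (f z - g z) := by
      rw [h1, ht]; ring
    rw [key]; ring

lemma Agree.iter {n : ℕ} {z₀ : ℂ} {f g : ℂ → ℂ} (h : Agree n z₀ f g) {i : ℕ} (hi : i < n) :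
    iteratedDeriv i f z₀ = iteratedDeriv i g z₀ := by
  obtain ⟨hf, hg, u, hu, hfg⟩ := h
  have := (natCast_le_analyticOrderAt_iff_iteratedDeriv_eq_zero (hf.sub hg)).1
    ((natCast_le_analyticOrderAt (hf.sub hg)).2 ⟨u, hu, hfg⟩) i hi
  rw [iteratedDeriv_sub hf.contDiffAt hg.contDiffAt] at this
  exact sub_eq_zero.1 this

lemma T_diffOn {a : ℂ} (ha : a ∈ ball (0:ℂ) 1) : DifferentiableOn ℂ (T a) (ball (0:ℂ) 1) :=
  fun _ hz => (T_hasDeriv (den_ne ha hz)).differentiableAt.differentiableWithinAt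

lemma schur_weak {z₀ γ : ℂ} (hz₀ : z₀ ∈ ball (0:ℂ) 1) (hγ : γ ∈ ball (0:ℂ) 1) {f : ℂ → ℂ}
    (hf : Hclass f) (h0 : f z₀ = γ) :
    ∃ g : ℂ → ℂ, DifferentiableOn ℂ g (ball 0 1) ∧ (∀ z ∈ ball (0:ℂ) 1, ‖g z‖ ≤ 1) ∧
      ∀ z ∈ ball (0:ℂ) 1, f z = T γ (T (-z₀) z * g z) := by
  obtain ⟨hd, hm⟩ := hf
  set ψ : ℂ → ℂ := fun w => T (-γ) (f (T z₀ w)) with hψ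
  have hτm : Set.MapsTo (T (-z₀)) (ball (0:ℂ) 1) (ball 0 1) := fun z hz => T_maps (neg_mem hz₀) hz
  have hTm : Set.MapsTo (T z₀) (ball (0:ℂ) 1) (ball 0 1) := fun z hz => T_maps hz₀ hz
  have hψd : DifferentiableOn ℂ ψ (ball 0 1) :=
    (T_diffOn (neg_mem hγ)).comp (hd.comp (T_diffOn hz₀) hTm) (hm.comp hTm)
  have hψ0 : ψ 0 = 0 := by simp [hψ, T_zero, h0, T_self]
  have hψm : Set.MapsTo ψ (ball (0:ℂ) 1) (closedBall (ψ 0) 1) := by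
    intro w hw
    rw [hψ0]
    exact ball_subset_closedBall (T_maps (neg_mem hγ) (hm (hTm hw)))
  refine ⟨fun z => dslope ψ 0 (T (-z₀) z), ?_, ?_, ?_⟩
  · exact ((Complex.differentiableOn_dslope (ball_mem_nhds _ one_pos)).2 hψd).comp
      (T_diffOn (neg_mem hz₀)) hτm
  · intro z hz
    simpa using Complex.norm_dslope_le_div_of_mapsTo_ball hψd hψm (hτm hz)
  · intro z hz
    have := sub_smul_dslope ψ 0 (T (-z₀) z)
    rw [sub_zero, hψ0, sub_zero, smul_eq_mul] at this
    dsimp only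
    rw [this, hψ]
    dsimp only
    rw [T_inv hz₀ hz, T_inv hγ (hm hz)]

lemma diffOn_an {z₀ : ℂ} (hz₀ : z₀ ∈ ball (0:ℂ) 1) {g : ℂ → ℂ}
    (hg : DifferentiableOn ℂ g (ball 0 1)) : AnalyticAt ℂ g z₀ :=
  hg.analyticAt (isOpen_ball.mem_nhds hz₀)

lemma schur_strong {z₀ γ : ℂ} (hz₀ : z₀ ∈ ball (0:ℂ) 1) (hγ : γ ∈ ball (0:ℂ) 1) {f : ℂ → ℂ}
    (hf : Hclass f) (h0 : f z₀ = γ) (h1 : H1 f z₀ ∈ ball (0:ℂ) 1) :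
    ∃ g : ℂ → ℂ, Hclass g ∧ g z₀ = H1 f z₀ ∧ H2 f z₀ = H1 g z₀ ∧
      ∀ z ∈ ball (0:ℂ) 1, f z = T γ (T (-z₀) z * g z) := by
  obtain ⟨g, hg, hgm, hfg⟩ := schur_weak hz₀ hγ hf h0
  obtain ⟨-, hv, hv2⟩ := step_val hz₀ hγ (diffOn_an hz₀ hg)
    (Filter.eventually_of_mem (isOpen_ball.mem_nhds hz₀) hfg)
  rw [hv] at h1
  refine ⟨g, ⟨hg, fun w hw => ?_⟩, hv.symm, hv2 h1, hfg⟩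
  by_contra hcon
  have hw1 : 1 ≤ ‖g w‖ := by simpa using hcon
  have := Complex.norm_eqOn_of_isPreconnected_of_isMaxOn (convex_ball (0:ℂ) 1).isPreconnected
    isOpen_ball hg hw (fun z hz => (hgm z hz).trans hw1) hz₀
  simp only [Function.comp, Function.const] at this
  rw [mem_ball_zero_iff] at h1
  linarith

lemma Hclass.step {z₀ γ : ℂ} (hz₀ : z₀ ∈ ball (0:ℂ) 1) (hγ : γ ∈ ball (0:ℂ) 1) {g : ℂ → ℂ}
    (hg : DifferentiableOn ℂ g (ball 0 1)) (hm : ∀ z ∈ ball (0:ℂ) 1, ‖g z‖ ≤ 1) :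
    Hclass (fun z => T γ (T (-z₀) z * g z)) := by
  have hmm : Set.MapsTo (fun z => T (-z₀) z * g z) (ball (0:ℂ) 1) (ball 0 1) := by
    intro z hz
    have h1 := T_maps (neg_mem hz₀) hz
    have h2 := hm z hz
    simp only [mem_ball_zero_iff, norm_mul] at *
    nlinarith [norm_nonneg (T (-z₀) z)]
  exact ⟨(T_diffOn hγ).comp ((T_diffOn (neg_mem hz₀)).mul hg) hmm,
    fun z hz => T_maps hγ (hmm hz)⟩

lemma Hclass.le {g : ℂ → ℂ} (hg : Hclass g) : ∀ z ∈ ball (0:ℂ) 1, ‖g z‖ ≤ 1 :=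
  fun z hz => (mem_ball_zero_iff.1 (hg.2 hz)).le

/-- The functions `f_ε`, `|ε| ≤ 1`, belong to `ℋ`, interpolate the data
`(γ₀, γ₁, γ₂)` at `z₀`, and their third derivatives at `z₀` sweep out exactly the
variability region `{f'''(z₀) : f ∈ ℋ, f(z₀) = γ₀, H¹f(z₀) = γ₁, H²f(z₀) = γ₂}`. -/
theorem schwarz_pick_third_extremals (z₀ γ₀ γ₁ γ₂ : ℂ)
    (hz₀ : z₀ ∈ ball (0 : ℂ) 1) (hγ₀ : γ₀ ∈ ball (0 : ℂ) 1)
    (hγ₁ : γ₁ ∈ ball (0 : ℂ) 1) (hγ₂ : γ₂ ∈ ball (0 : ℂ) 1) :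
    (∀ ε ∈ closedBall (0 : ℂ) 1,
        Hclass (fE z₀ γ₀ γ₁ γ₂ ε) ∧ fE z₀ γ₀ γ₁ γ₂ ε z₀ = γ₀ ∧
          H1 (fE z₀ γ₀ γ₁ γ₂ ε) z₀ = γ₁ ∧ H2 (fE z₀ γ₀ γ₁ γ₂ ε) z₀ = γ₂) ∧
      {w : ℂ | ∃ f : ℂ → ℂ, Hclass f ∧ f z₀ = γ₀ ∧ H1 f z₀ = γ₁ ∧ H2 f z₀ = γ₂ ∧
          iteratedDeriv 3 f z₀ = w} =
        {w : ℂ | ∃ ε ∈ closedBall (0 : ℂ) 1,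
          iteratedDeriv 3 (fE z₀ γ₀ γ₁ γ₂ ε) z₀ = w} := by
  have hnh := isOpen_ball.mem_nhds hz₀
  have part1 : ∀ ε ∈ closedBall (0 : ℂ) 1,
        Hclass (fE z₀ γ₀ γ₁ γ₂ ε) ∧ fE z₀ γ₀ γ₁ γ₂ ε z₀ = γ₀ ∧
          H1 (fE z₀ γ₀ γ₁ γ₂ ε) z₀ = γ₁ ∧ H2 (fE z₀ γ₀ γ₁ γ₂ ε) z₀ = γ₂ := by
    intro ε hε
    have hh : Hclass (fun z => T γ₂ (T (-z₀) z * ε)) :=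
      Hclass.step hz₀ hγ₂ (g := fun _ => ε) (differentiableOn_const _)
        (fun z _ => by simpa using hε)
    have hg := Hclass.step hz₀ hγ₁ hh.1 hh.le
    have hf := Hclass.step hz₀ hγ₀ hg.1 hg.le
    have hF : fE z₀ γ₀ γ₁ γ₂ ε = fun z => T γ₀ (T (-z₀) z *
        T γ₁ (T (-z₀) z * T γ₂ (T (-z₀) z * ε))) := by
      funext z; simp only [fE, mul_comm ε]
    rw [hF]
    obtain ⟨a1, a2, a3⟩ := step_val hz₀ hγ₀ (diffOn_an hz₀ hg.1)
      (Filter.Eventually.of_forall fun z => rfl)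
    obtain ⟨b1, b2, -⟩ := step_val hz₀ hγ₁ (diffOn_an hz₀ hh.1)
      (Filter.Eventually.of_forall fun z => rfl)
    refine ⟨hf, a1, a2.trans b1, (a3 (hg.2 hz₀)).trans (b2.trans ?_)⟩
    simp [T_self, T_zero]
  refine ⟨part1, Set.Subset.antisymm ?_ ?_⟩
  · rintro w ⟨f, hf, h0, h1, h2, rfl⟩
    obtain ⟨g, hg, hg0, hg1, hfg⟩ := schur_strong hz₀ hγ₀ hf h0 (h1 ▸ hγ₁)
    rw [h1] at hg0
    rw [h2] at hg1
    obtain ⟨h, hh, hh0, -, hgh⟩ := schur_strong hz₀ hγ₁ hg hg0 (hg1 ▸ hγ₂)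
    rw [← hg1] at hh0
    obtain ⟨k, hk, hkm, hhk⟩ := schur_weak hz₀ hγ₂ hh hh0
    refine ⟨k z₀, by simpa using hkm z₀ hz₀, ?_⟩
    have hka := diffOn_an hz₀ hk
    have A1 : Agree 1 z₀ k (fun _ => k z₀) := by
      refine ⟨hka, analyticAt_const, dslope k z₀, ?_, ?_⟩
      · exact diffOn_an hz₀ ((Complex.differentiableOn_dslope hnh).2 hk)
      · refine Filter.Eventually.of_forall fun z => ?_
        have := sub_smul_dslope k z₀ z
        rw [smul_eq_mul] at this
        rw [pow_one, this]
    have A2 := A1.step hz₀ (Filter.eventually_of_mem hnh hhk)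
      (Filter.Eventually.of_forall fun z => rfl)
    have A3 := A2.step hz₀ (Filter.eventually_of_mem hnh hgh)
      (Filter.Eventually.of_forall fun z => rfl)
    have A4 := A3.step hz₀ (G := fE z₀ γ₀ γ₁ γ₂ (k z₀)) (Filter.eventually_of_mem hnh hfg)
      (Filter.Eventually.of_forall fun z => by simp only [fE, mul_comm (k z₀)])
    exact (A4.iter (by norm_num)).symm
  · rintro w ⟨ε, hε, rfl⟩
    obtain ⟨p1, p2, p3, p4⟩ := part1 ε hε
    exact ⟨_, p1, p2, p3, p4, rfl⟩
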